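/- Let ρ_a (a in a finite set A) be density matrices on ℂ^d, let (p_a) be a probability vector on A, and let (E_b) (b in a finite set B) be positive semidefinite d×d matrices with Σ_b E_b = I (a POVM). Define the joint distribution P(a,b) = p_a Tr(ρ_a E_b) (a probability distribution on A×B), with marginals P_A(a) = p_a and P_B(b) = Σ_a p_a Tr(ρ_a E_b), and the mutual information H(A:B) = H(P_A) + H(P_B) − H(P). Then H(A:B) ≤ S(ρ) − Σ_a p_a S(ρ_a), where ρ = Σ_a p_a ρ_a (the Holevo bound). -/

import Mathlib

open scoped ComplexOrder

noncomputable section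

/-- A density matrix: positive semidefinite with trace one. -/
def IsDensity {ι : Type*} [Fintype ι] (ρ : Matrix ι ι ℂ) : Prop :=
  ρ.PosSemidef ∧ ρ.trace = 1

/-- The Shannon entropy `−Σ pᵢ log₂ pᵢ` (with the convention `0 · log₂ 0 = 0`). -/
def shannon {ι : Type*} [Fintype ι] (p : ι → ℝ) : ℝ :=
  -∑ i, p i * Real.logb 2 (p i)

/-- The von Neumann entropy `−Σ λᵢ log₂ λᵢ` of a (Hermitian) matrix, where the `λᵢ`
are its eigenvalues counted with multiplicity. -/
def vnEntropy {d : ℕ} (ρ : Matrix (Fin d) (Fin d) ℂ) : ℝ :=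
  if h : ρ.IsHermitian then
    -∑ i, h.eigenvalues i * Real.logb 2 (h.eigenvalues i)
  else 0

/-!
Writing `P(b | a) = Tr(ρₐ E_b)`, the mutual information is `Σₐ pₐ D(P(· | a) ‖ P_B)` and the Holevo
quantity is `Σₐ pₐ D(ρₐ ‖ ρ)`, so it suffices that a measurement does not increase relative entropy.
Diagonalise `ρ = Σ λᵢ |uᵢ⟩⟨uᵢ|` and `σ = Σ μⱼ |vⱼ⟩⟨vⱼ|`. Then `D(ρ ‖ σ)` is the classical relative
entropy of the Nussbaum–Szkoła weights `λᵢ |⟨uᵢ, vⱼ⟩|²` and `μⱼ |⟨uᵢ, vⱼ⟩|²`, and two classical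
relative entropies can be compared through the quantities `Σ P² / (Q + t P)`, whose integral over
`t > 0` (suitably renormalised) is `Σ P (log P - log Q)`. Each of these is a supremum of
`Σ (2 x P - x² (Q + t P))` over `x`; the optimal `x` for the outcome distributions turns into the
observable `X = Σ x_b E_b`, where Kadison's inequality `X² ≤ Σ x_b² E_b` bounds it by
`2 Tr ρX - Tr σX² - t Tr ρX²`, which in turn is at most the value for the Nussbaum–Szkoła weights.
-/

open Filter Matrix Topology

section RelativeEntropy

variable {I J : Type*} [Fintype I] [Fintype J]

/-- The classical relative entropy `D(P ‖ Q)` in nats of two families of nonnegative weights. It is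
only meaningful when `P` vanishes wherever `Q` does, since otherwise `Real.log 0 = 0` replaces the
true value `∞`. -/
def relEntropy (P Q : I → ℝ) : ℝ :=
  ∑ i, P i * (Real.log (P i) - Real.log (Q i))

/-- The quadratic divergence `Σ P² / (Q + t P)`, whose integral over `t` yields the relative
entropy. Indices with `P i = Q i = 0` contribute nothing, by the convention `0 / 0 = 0`. -/
def quadDiv (t : ℝ) (P Q : I → ℝ) : ℝ :=
  ∑ i, P i ^ 2 / (Q i + t * P i)

/-- The antiderivative `Σ P log (Q + t P)` of `quadDiv` in the variable `t`. -/
def logPotential (P Q : I → ℝ) (t : ℝ) : ℝ :=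
  ∑ i, P i * Real.log (Q i + t * P i)

lemma hasDerivAt_mul_log_add_mul {x y t : ℝ} (hx : 0 ≤ x) (hy : 0 ≤ y) (hxy : y = 0 → x = 0)
    (ht : 0 ≤ t) :
    HasDerivAt (fun s ↦ x * Real.log (y + s * x)) (x ^ 2 / (y + t * x)) t := by
  rcases hy.eq_or_lt with rfl | hy
  · simpa [hxy rfl] using hasDerivAt_const t (0 : ℝ)
  · have hpos : y + t * x ≠ 0 := by positivity
    have hlin : HasDerivAt (fun s ↦ y + s * x) x t := by
      simpa using ((hasDerivAt_id t).mul_const x).const_add y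
    exact ((hlin.log hpos).const_mul x).congr_deriv (by ring)

lemma tendsto_mul_log_add_mul_sub {x : ℝ} (hx : 0 ≤ x) (y : ℝ) :
    Tendsto (fun t ↦ x * Real.log (y + t * x) - x * Real.log t) atTop (𝓝 (x * Real.log x)) := by
  rcases hx.eq_or_lt with rfl | hx
  · simp
  · have hlim : Tendsto (fun t : ℝ ↦ y / t + x) atTop (𝓝 x) := by
      simpa using (tendsto_const_nhds.div_atTop tendsto_id).add_const x
    refine ((hlim.log hx.ne').const_mul x).congr' ?_
    filter_upwards [eventually_gt_atTop 0, hlim.eventually (lt_mem_nhds hx)] with t ht hpos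
    have hfactor : y + t * x = t * (y / t + x) := by field_simp
    rw [hfactor, Real.log_mul ht.ne' hpos.ne']
    ring

lemma hasDerivAt_logPotential {P Q : I → ℝ} (hP : ∀ i, 0 ≤ P i) (hQ : ∀ i, 0 ≤ Q i)
    (hPQ : ∀ i, Q i = 0 → P i = 0) {t : ℝ} (ht : 0 ≤ t) :
    HasDerivAt (logPotential P Q) (quadDiv t P Q) t :=
  HasDerivAt.fun_sum fun i _ ↦ hasDerivAt_mul_log_add_mul (hP i) (hQ i) (hPQ i) ht

lemma tendsto_logPotential_sub_relEntropy {P : I → ℝ} (hP : ∀ i, 0 ≤ P i) (Q : I → ℝ) :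
    Tendsto (fun t ↦ logPotential P Q t - logPotential P Q 0 - (∑ i, P i) * Real.log t) atTop
      (𝓝 (relEntropy P Q)) := by
  have hsum := (tendsto_finsetSum Finset.univ fun i _ ↦
    tendsto_mul_log_add_mul_sub (hP i) (Q i)).sub_const (logPotential P Q 0)
  convert hsum using 2
  · simp only [logPotential, Finset.sum_sub_distrib, Finset.sum_mul]
    ring
  · simp only [relEntropy, logPotential, mul_sub, Finset.sum_sub_distrib, zero_mul, add_zero]

theorem relEntropy_le_of_quadDiv_le {P Q : I → ℝ} {P' Q' : J → ℝ}
    (hP : ∀ i, 0 ≤ P i) (hQ : ∀ i, 0 ≤ Q i) (hPQ : ∀ i, Q i = 0 → P i = 0)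
    (hP' : ∀ j, 0 ≤ P' j) (hQ' : ∀ j, 0 ≤ Q' j) (hPQ' : ∀ j, Q' j = 0 → P' j = 0)
    (hsum : ∑ i, P i = ∑ j, P' j) (hdiv : ∀ t, 0 < t → quadDiv t P Q ≤ quadDiv t P' Q') :
    relEntropy P Q ≤ relEntropy P' Q' := by
  let gap : ℝ → ℝ := fun t ↦ logPotential P' Q' t - logPotential P Q t
  have hderiv : ∀ t, 0 ≤ t → HasDerivAt gap (quadDiv t P' Q' - quadDiv t P Q) t := fun t ht ↦
    (hasDerivAt_logPotential hP' hQ' hPQ' ht).sub (hasDerivAt_logPotential hP hQ hPQ ht)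
  have hmono : MonotoneOn gap (Set.Ici 0) := by
    refine monotoneOn_of_hasDerivWithinAt_nonneg (convex_Ici 0)
      (fun t ht ↦ (hderiv t ht).continuousAt.continuousWithinAt)
      (fun t ht ↦ (hderiv t (interior_subset ht)).hasDerivWithinAt) fun t ht ↦ ?_
    rw [interior_Ici] at ht
    exact sub_nonneg.mpr (hdiv t ht)
  have hlim : Tendsto (fun t ↦ gap t - gap 0) atTop (𝓝 (relEntropy P' Q' - relEntropy P Q)) := by
    refine ((tendsto_logPotential_sub_relEntropy hP' Q').sub
      (tendsto_logPotential_sub_relEntropy hP Q)).congr fun t ↦ ?_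
    rw [hsum]
    ring
  have hgap : ∀ᶠ t in atTop, 0 ≤ gap t - gap 0 := by
    filter_upwards [eventually_ge_atTop 0] with t ht
    exact sub_nonneg.mpr (hmono Set.self_mem_Ici ht ht)
  exact sub_nonneg.mp (ge_of_tendsto hlim hgap)

lemma two_mul_mul_sub_mul_sq_le_sq_div {D p : ℝ} (hD : 0 ≤ D) (hp : D = 0 → p = 0) (x : ℝ) :
    2 * (x * p) - D * x ^ 2 ≤ p ^ 2 / D := by
  rcases hD.eq_or_lt with rfl | hD
  · simp [hp rfl]
  · rw [le_div_iff₀ hD]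
    linarith [sq_nonneg (D * x - p)]

lemma quadDiv_eq_sum_optimal {t : ℝ} {P Q x : I → ℝ} (hx : ∀ i, x i = P i / (Q i + t * P i)) :
    quadDiv t P Q = 2 * ∑ i, x i * P i - ∑ i, x i ^ 2 * Q i - t * ∑ i, x i ^ 2 * P i := by
  simp only [quadDiv, Finset.mul_sum, ← Finset.sum_sub_distrib]
  refine Finset.sum_congr rfl fun i _ ↦ ?_
  have hfactor : 2 * (x i * P i) - x i ^ 2 * Q i - t * (x i ^ 2 * P i)
      = 2 * (x i * P i) - x i ^ 2 * (Q i + t * P i) := by ring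
  rw [hfactor, hx]
  generalize Q i + t * P i = D
  rcases eq_or_ne D 0 with rfl | hD
  · simp
  · field [hD]

end RelativeEntropy

section Measurement

variable {𝕜 n A B : Type*} [RCLike 𝕜] [Fintype A]

lemma posSemidef_sum_smul {p : A → ℝ} (hp : ∀ a, 0 ≤ p a) {ρ : A → Matrix n n 𝕜}
    (hρ : ∀ a, (ρ a).PosSemidef) : (∑ a, p a • ρ a).PosSemidef :=
  posSemidef_sum _ fun a _ ↦ (hρ a).smul (hp a)

lemma posSemidef_sum_smul_sub_smul {p : A → ℝ} (hp : ∀ a, 0 ≤ p a) {ρ : A → Matrix n n 𝕜}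
    (hρ : ∀ a, (ρ a).PosSemidef) (a : A) : (∑ a', p a' • ρ a' - p a • ρ a).PosSemidef := by
  classical
  rw [← Finset.sum_erase_eq_sub (Finset.mem_univ a)]
  exact posSemidef_sum _ fun a' _ ↦ (hρ a').smul (hp a')

/-- A positive operator-valued measure with finitely many outcomes. -/
structure IsPOVM [DecidableEq n] [Fintype B] (E : B → Matrix n n 𝕜) : Prop where
  posSemidef : ∀ b, (E b).PosSemidef
  sum_eq_one : ∑ b, E b = 1

lemma IsPOVM.isHermitian_sum_smul [DecidableEq n] [Fintype B] {E : B → Matrix n n 𝕜}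
    (hE : IsPOVM E) (x : B → ℝ) : (∑ b, x b • E b).IsHermitian :=
  isSelfAdjoint_sum _ fun b _ ↦ (IsSelfAdjoint.all (x b)).smul (hE.posSemidef b).isHermitian

variable [Fintype n] {ρ σ : Matrix n n 𝕜}

open scoped MatrixOrder in
lemma re_trace_mul_nonneg {M N : Matrix n n 𝕜} (hM : M.PosSemidef) (hN : N.PosSemidef) :
    0 ≤ RCLike.re (M * N).trace := by
  classical
  obtain ⟨R, rfl⟩ := CStarAlgebra.nonneg_iff_eq_star_mul_self.mp hM.nonneg
  rw [star_eq_conjTranspose, Matrix.mul_assoc, trace_mul_comm]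
  exact (RCLike.nonneg_iff.mp (hN.mul_mul_conjTranspose_same R).trace_nonneg).1

/-- The outcome weights `Tr(ρ E_b)` given by the Born rule for the measurement `E` in the state
`ρ`. Taking the real part loses nothing, since the trace is real for Hermitian `ρ` and `E_b`. -/
def bornProb (E : B → Matrix n n 𝕜) (ρ : Matrix n n 𝕜) (b : B) : ℝ :=
  RCLike.re (ρ * E b).trace

lemma re_trace_mul_sum_smul [Fintype B] (E : B → Matrix n n 𝕜) (ρ : Matrix n n 𝕜) (x : B → ℝ) :
    RCLike.re (ρ * ∑ b, x b • E b).trace = ∑ b, x b * bornProb E ρ b := by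
  simp only [bornProb, Finset.mul_sum, trace_sum, map_sum, Matrix.mul_smul, trace_smul,
    RCLike.smul_re]

lemma bornProb_sum_smul (E : B → Matrix n n 𝕜) (p : A → ℝ) (ρ : A → Matrix n n 𝕜) (b : B) :
    bornProb E (∑ a, p a • ρ a) b = ∑ a, p a * bornProb E (ρ a) b := by
  simp only [bornProb, Finset.sum_mul, trace_sum, map_sum, Matrix.smul_mul, trace_smul,
    RCLike.smul_re]

namespace IsPOVM

variable [DecidableEq n] [Fintype B] {E : B → Matrix n n 𝕜}

lemma bornProb_nonneg (hE : IsPOVM E) (hρ : ρ.PosSemidef) (b : B) : 0 ≤ bornProb E ρ b :=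
  re_trace_mul_nonneg hρ (hE.posSemidef b)

lemma sum_bornProb (hE : IsPOVM E) (ρ : Matrix n n 𝕜) :
    ∑ b, bornProb E ρ b = RCLike.re ρ.trace := by
  simp only [bornProb, ← map_sum, ← trace_sum, ← Finset.mul_sum, hE.sum_eq_one, Matrix.mul_one]

lemma bornProb_eq_zero_of_dominated (hE : IsPOVM E) (hρ : ρ.PosSemidef) {c : ℝ} (hc : 0 < c)
    (hdom : (σ - c • ρ).PosSemidef) {b : B} (hb : bornProb E σ b = 0) : bornProb E ρ b = 0 := by
  have hdiff : bornProb E (σ - c • ρ) b = bornProb E σ b - c * bornProb E ρ b := by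
    simp only [bornProb, Matrix.sub_mul, Matrix.smul_mul, trace_sub, trace_smul, map_sub,
      RCLike.smul_re]
  have hle := hE.bornProb_nonneg hdom b
  rw [hdiff, hb, zero_sub, Left.nonneg_neg_iff] at hle
  exact le_antisymm (nonpos_of_mul_nonpos_right hle hc) (hE.bornProb_nonneg hρ b)

lemma posSemidef_sum_sq_smul_sub_sq (hE : IsPOVM E) (x : B → ℝ) :
    (∑ b, x b ^ 2 • E b - (∑ b, x b • E b) * ∑ b, x b • E b).PosSemidef := by
  set X := ∑ b, x b • E b with hX
  have hexpand : ∀ b, (x b • 1 - X) * E b * (x b • 1 - X)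
      = x b ^ 2 • E b - X * (x b • E b) - (x b • E b) * X + X * E b * X := fun b ↦ by
    simp only [sub_mul, mul_sub, smul_mul_assoc, mul_smul_comm, one_mul, mul_one, smul_sub,
      smul_smul, sq]
    abel
  have hsum : ∑ b, (x b • 1 - X) * E b * (x b • 1 - X) = ∑ b, x b ^ 2 • E b - X * X := by
    simp only [hexpand, Finset.sum_add_distrib, Finset.sum_sub_distrib, ← Finset.mul_sum,
      ← Finset.sum_mul, hE.sum_eq_one, ← hX, mul_one]
    abel
  have hherm : ∀ b, (x b • 1 - X)ᴴ = x b • 1 - X := fun b ↦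
    ((IsSelfAdjoint.all (x b)).smul (.one _)).sub (hE.isHermitian_sum_smul x)
  rw [← hsum]
  refine posSemidef_sum _ fun b _ ↦ ?_
  have hconj := (hE.posSemidef b).mul_mul_conjTranspose_same (x b • 1 - X)
  rwa [hherm] at hconj

lemma re_trace_mul_sq_le (hE : IsPOVM E) (hρ : ρ.PosSemidef) (x : B → ℝ) :
    RCLike.re (ρ * ((∑ b, x b • E b) * ∑ b, x b • E b)).trace
      ≤ ∑ b, x b ^ 2 * bornProb E ρ b := by
  have hnonneg := re_trace_mul_nonneg hρ (hE.posSemidef_sum_sq_smul_sub_sq x)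
  rw [Matrix.mul_sub, trace_sub, map_sub, re_trace_mul_sum_smul] at hnonneg
  exact sub_nonneg.mp hnonneg

end IsPOVM

end Measurement

section QuantumRelativeEntropy

variable {𝕜 n A : Type*} [RCLike 𝕜] [Fintype n] [DecidableEq n]
variable {ρ σ : Matrix n n 𝕜}

/-- The unitary matrix whose columns are the eigenvectors of a Hermitian matrix. -/
abbrev eigenMatrix (hρ : ρ.IsHermitian) : Matrix n n 𝕜 :=
  hρ.eigenvectorUnitary

/-- The matrix `(⟨uᵢ, vⱼ⟩)ᵢⱼ` of inner products between the eigenvectors of `ρ` and of `σ`. -/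
def eigenvectorOverlap (hρ : ρ.IsHermitian) (hσ : σ.IsHermitian) : Matrix n n 𝕜 :=
  (eigenMatrix hρ)ᴴ * eigenMatrix hσ

/-- The first Nussbaum–Szkoła distribution `λᵢ |⟨uᵢ, vⱼ⟩|²` of the pair `(ρ, σ)`. -/
def nussbaumSzkolaFst (hρ : ρ.IsHermitian) (hσ : σ.IsHermitian) (ij : n × n) : ℝ :=
  hρ.eigenvalues ij.1 * ‖eigenvectorOverlap hρ hσ ij.1 ij.2‖ ^ 2

/-- The second Nussbaum–Szkoła distribution `μⱼ |⟨uᵢ, vⱼ⟩|²` of the pair `(ρ, σ)`. -/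
def nussbaumSzkolaSnd (hρ : ρ.IsHermitian) (hσ : σ.IsHermitian) (ij : n × n) : ℝ :=
  hσ.eigenvalues ij.2 * ‖eigenvectorOverlap hρ hσ ij.1 ij.2‖ ^ 2

/-- The diagonal `⟨vⱼ, ρ vⱼ⟩` of `ρ` in the eigenbasis of `σ`. -/
def eigenbasisDiag (hσ : σ.IsHermitian) (ρ : Matrix n n 𝕜) (j : n) : ℝ :=
  RCLike.re (((eigenMatrix hσ)ᴴ * ρ * eigenMatrix hσ) j j)

/-- Umegaki's quantum relative entropy `Tr ρ (log ρ - log σ)` in nats, encoded as the classical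
relative entropy of the Nussbaum–Szkoła distributions, which avoids matrix logarithms. Like
`relEntropy`, it is only meaningful when the support of `ρ` is contained in that of `σ`. -/
def quantumRelEntropy (hρ : ρ.IsHermitian) (hσ : σ.IsHermitian) : ℝ :=
  relEntropy (nussbaumSzkolaFst hρ hσ) (nussbaumSzkolaSnd hρ hσ)

lemma conjTranspose_eigenMatrix_mul_mul (hρ : ρ.IsHermitian) :
    (eigenMatrix hρ)ᴴ * ρ * eigenMatrix hρ = diagonal (RCLike.ofReal ∘ hρ.eigenvalues) := by
  rw [← hρ.conjStarAlgAut_star_eigenvectorUnitary, Unitary.conjStarAlgAut_star_apply,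
    star_eq_conjTranspose]

lemma eigenMatrix_mul_conjTranspose (hρ : ρ.IsHermitian) :
    eigenMatrix hρ * (eigenMatrix hρ)ᴴ = 1 :=
  Unitary.coe_mul_star_self _

lemma eigenvectorOverlap_mem_unitary (hρ : ρ.IsHermitian) (hσ : σ.IsHermitian) :
    eigenvectorOverlap hρ hσ ∈ unitaryGroup n 𝕜 :=
  mul_mem (Unitary.star_mem hρ.eigenvectorUnitary.2) hσ.eigenvectorUnitary.2

lemma sum_norm_sq_apply_of_mem_unitary {U : Matrix n n 𝕜} (hU : U ∈ unitaryGroup n 𝕜) (i : n) :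
    ∑ j, ‖U i j‖ ^ 2 = 1 := by
  have hdiag := congr_fun₂ (mem_unitaryGroup_iff.mp hU) i i
  rw [one_apply_eq, mul_apply] at hdiag
  simp only [star_apply, RCLike.star_def, RCLike.mul_conj] at hdiag
  exact_mod_cast hdiag

lemma eigenbasisDiag_self (hσ : σ.IsHermitian) : eigenbasisDiag hσ σ = hσ.eigenvalues := by
  funext j
  rw [eigenbasisDiag, conjTranspose_eigenMatrix_mul_mul, diagonal_apply_eq,
    Function.comp_apply, RCLike.ofReal_re]

lemma eigenbasisDiag_sum_smul [Fintype A] (hσ : σ.IsHermitian) (p : A → ℝ)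
    (ρ : A → Matrix n n 𝕜) (j : n) :
    eigenbasisDiag hσ (∑ a, p a • ρ a) j = ∑ a, p a * eigenbasisDiag hσ (ρ a) j := by
  simp only [eigenbasisDiag, Finset.mul_sum, Finset.sum_mul, Matrix.mul_smul, Matrix.smul_mul,
    Matrix.sum_apply, Matrix.smul_apply, map_sum, RCLike.smul_re]

lemma eigenbasisDiag_nonneg (hσ : σ.IsHermitian) (hρ : ρ.PosSemidef) (j : n) :
    0 ≤ eigenbasisDiag hσ ρ j :=
  (RCLike.nonneg_iff.mp (hρ.conjTranspose_mul_mul_same _).diag_nonneg).1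

lemma sum_nussbaumSzkolaFst_left (hρ : ρ.IsHermitian) (hσ : σ.IsHermitian) (j : n) :
    ∑ i, nussbaumSzkolaFst hρ hσ (i, j) = eigenbasisDiag hσ ρ j := by
  have hconj : (eigenMatrix hσ)ᴴ * ρ * eigenMatrix hσ
      = (eigenvectorOverlap hρ hσ)ᴴ * (diagonal (RCLike.ofReal ∘ hρ.eigenvalues)
        * eigenvectorOverlap hρ hσ) := by
    have hUU := eigenMatrix_mul_conjTranspose hρ
    rw [← conjTranspose_eigenMatrix_mul_mul, eigenvectorOverlap, conjTranspose_mul,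
      conjTranspose_conjTranspose]
    grind
  rw [eigenbasisDiag, hconj, mul_apply, map_sum]
  refine Finset.sum_congr rfl fun i _ ↦ ?_
  rw [diagonal_mul, conjTranspose_apply, mul_left_comm, Function.comp_apply, RCLike.re_ofReal_mul,
    RCLike.star_def, RCLike.conj_mul, nussbaumSzkolaFst]
  norm_cast

lemma sum_nussbaumSzkolaFst_right (hρ : ρ.IsHermitian) (hσ : σ.IsHermitian) (i : n) :
    ∑ j, nussbaumSzkolaFst hρ hσ (i, j) = hρ.eigenvalues i := by
  simp only [nussbaumSzkolaFst, ← Finset.mul_sum,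
    sum_norm_sq_apply_of_mem_unitary (eigenvectorOverlap_mem_unitary hρ hσ), mul_one]

lemma sum_nussbaumSzkolaFst (hρ : ρ.IsHermitian) (hσ : σ.IsHermitian) :
    ∑ ij, nussbaumSzkolaFst hρ hσ ij = RCLike.re ρ.trace := by
  simp only [Fintype.sum_prod_type, sum_nussbaumSzkolaFst_right, hρ.trace_eq_sum_eigenvalues,
    map_sum, RCLike.ofReal_re]

lemma nussbaumSzkolaFst_nonneg (hρ : ρ.PosSemidef) (hσ : σ.IsHermitian) (ij : n × n) :
    0 ≤ nussbaumSzkolaFst hρ.1 hσ ij :=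
  mul_nonneg (hρ.eigenvalues_nonneg _) (sq_nonneg _)

lemma nussbaumSzkolaSnd_nonneg (hρ : ρ.IsHermitian) (hσ : σ.PosSemidef) (ij : n × n) :
    0 ≤ nussbaumSzkolaSnd hρ hσ.1 ij :=
  mul_nonneg (hσ.eigenvalues_nonneg _) (sq_nonneg _)

lemma nussbaumSzkolaFst_eq_zero_of_dominated (hρ : ρ.PosSemidef) (hσ : σ.IsHermitian) {c : ℝ}
    (hc : 0 < c) (hdom : (σ - c • ρ).PosSemidef) {ij : n × n}
    (h : nussbaumSzkolaSnd hρ.1 hσ ij = 0) : nussbaumSzkolaFst hρ.1 hσ ij = 0 := by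
  obtain ⟨i, j⟩ := ij
  rcases mul_eq_zero.mp h with hμ | hoverlap
  · have hdiff : eigenbasisDiag hσ (σ - c • ρ) j
        = eigenbasisDiag hσ σ j - c * eigenbasisDiag hσ ρ j := by
      simp only [eigenbasisDiag, Matrix.mul_sub, Matrix.sub_mul, Matrix.mul_smul, Matrix.smul_mul,
        Matrix.sub_apply, Matrix.smul_apply, map_sub, RCLike.smul_re]
    have hle := eigenbasisDiag_nonneg hσ hdom j
    rw [hdiff, eigenbasisDiag_self, hμ, zero_sub, Left.nonneg_neg_iff] at hle
    have hsum : ∑ i, nussbaumSzkolaFst hρ.1 hσ (i, j) = 0 := by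
      rw [sum_nussbaumSzkolaFst_left]
      exact le_antisymm (nonpos_of_mul_nonpos_right hle hc) (eigenbasisDiag_nonneg hσ hρ j)
    exact (Finset.sum_eq_zero_iff_of_nonneg fun i _ ↦ nussbaumSzkolaFst_nonneg hρ hσ (i, j)).mp
      hsum i (Finset.mem_univ i)
  · rw [nussbaumSzkolaFst, hoverlap, mul_zero]

theorem quantumRelEntropy_eq {hρ : ρ.IsHermitian} {hσ : σ.IsHermitian}
    (hsupp : ∀ ij, nussbaumSzkolaSnd hρ hσ ij = 0 → nussbaumSzkolaFst hρ hσ ij = 0) :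
    quantumRelEntropy hρ hσ = ∑ i, hρ.eigenvalues i * Real.log (hρ.eigenvalues i)
      - ∑ j, eigenbasisDiag hσ ρ j * Real.log (hσ.eigenvalues j) := by
  have hterm : ∀ i j, nussbaumSzkolaFst hρ hσ (i, j)
        * (Real.log (nussbaumSzkolaFst hρ hσ (i, j)) - Real.log (nussbaumSzkolaSnd hρ hσ (i, j)))
      = nussbaumSzkolaFst hρ hσ (i, j) * Real.log (hρ.eigenvalues i)
        - nussbaumSzkolaFst hρ hσ (i, j) * Real.log (hσ.eigenvalues j) := fun i j ↦ by
    by_cases hzero : nussbaumSzkolaFst hρ hσ (i, j) = 0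
    · simp only [hzero, zero_mul, sub_zero]
    obtain ⟨hlam, hoverlap⟩ := mul_ne_zero_iff.mp hzero
    have hmu := (mul_ne_zero_iff.mp (mt (hsupp (i, j)) hzero)).1
    have hlogFst : Real.log (nussbaumSzkolaFst hρ hσ (i, j)) = _ := Real.log_mul hlam hoverlap
    have hlogSnd : Real.log (nussbaumSzkolaSnd hρ hσ (i, j)) = _ := Real.log_mul hmu hoverlap
    rw [hlogFst, hlogSnd]
    ring
  simp only [quantumRelEntropy, relEntropy, Fintype.sum_prod_type, hterm, Finset.sum_sub_distrib]
  congr 1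
  · simp only [← Finset.sum_mul, sum_nussbaumSzkolaFst_right]
  · rw [Finset.sum_comm]
    simp only [← Finset.sum_mul, sum_nussbaumSzkolaFst_left]

lemma trace_mul_mul_conjTranspose (hρ : ρ.IsHermitian) (hσ : σ.IsHermitian) (M N : Matrix n n 𝕜) :
    (ρ * (M * Nᴴ)).trace = ∑ i, ∑ j, (hρ.eigenvalues i : 𝕜)
      * (((eigenMatrix hρ)ᴴ * M * eigenMatrix hσ) i j
        * star (((eigenMatrix hρ)ᴴ * N * eigenMatrix hσ) i j)) := by
  set U : Matrix n n 𝕜 := eigenMatrix hρ with hU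
  set V : Matrix n n 𝕜 := eigenMatrix hσ
  have hUU : U * Uᴴ = 1 := eigenMatrix_mul_conjTranspose hρ
  have hVV : V * Vᴴ = 1 := eigenMatrix_mul_conjTranspose hσ
  calc (ρ * (M * Nᴴ)).trace
      = (U * (Uᴴ * ρ * U) * ((Uᴴ * M * V) * (Vᴴ * Nᴴ))).trace := by
        congr 1
        grind
    _ = ((Uᴴ * ρ * U) * ((Uᴴ * M * V) * (Uᴴ * N * V)ᴴ)).trace := by
        rw [Matrix.mul_assoc, trace_mul_comm]
        simp only [conjTranspose_mul, conjTranspose_conjTranspose, Matrix.mul_assoc]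
    _ = _ := by
        rw [hU, conjTranspose_eigenMatrix_mul_mul]
        simp only [trace, diag_apply, diagonal_mul, mul_apply (M := _ * _ * _),
          conjTranspose_apply, Finset.mul_sum, Function.comp_apply]

lemma re_trace_mul_mul_conjTranspose_self (hρ : ρ.IsHermitian) (hσ : σ.IsHermitian)
    (M : Matrix n n 𝕜) :
    RCLike.re (ρ * (M * Mᴴ)).trace
      = ∑ i, ∑ j, hρ.eigenvalues i * ‖((eigenMatrix hρ)ᴴ * M * eigenMatrix hσ) i j‖ ^ 2 := by
  simp only [trace_mul_mul_conjTranspose hρ hσ, map_sum, RCLike.re_ofReal_mul, RCLike.star_def,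
    RCLike.mul_conj, ← RCLike.ofReal_pow, RCLike.ofReal_re]

end QuantumRelativeEntropy

section DataProcessing

variable {𝕜 n B : Type*} [RCLike 𝕜] [Fintype n] [DecidableEq n] [Fintype B]
variable {ρ σ : Matrix n n 𝕜}

lemma two_mul_re_mul_star_sub_le {l m t : ℝ} (hl : 0 ≤ l) (hm : 0 ≤ m) (ht : 0 < t) (y c : 𝕜) :
    2 * (l * RCLike.re (y * star c)) - m * ‖y‖ ^ 2 - t * (l * ‖y‖ ^ 2)
      ≤ (l * ‖c‖ ^ 2) ^ 2 / (m * ‖c‖ ^ 2 + t * (l * ‖c‖ ^ 2)) := by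
  have hcauchy : RCLike.re (y * star c) ≤ ‖y‖ * ‖c‖ := by
    simpa only [norm_mul, norm_star] using RCLike.re_le_norm (y * star c)
  have hzero : m + t * l = 0 → l * ‖c‖ = 0 := fun h ↦ by
    have hl0 : l = 0 := by nlinarith [mul_nonneg ht.le hl]
    rw [hl0, zero_mul]
  have hcancel : (l * ‖c‖) ^ 2 / (m + t * l)
      = (l * ‖c‖ ^ 2) ^ 2 / (m * ‖c‖ ^ 2 + t * (l * ‖c‖ ^ 2)) := by
    rcases eq_or_ne c 0 with rfl | hc
    · simp
    · have hnorm : ‖c‖ ^ 2 ≠ 0 := pow_ne_zero 2 (norm_ne_zero_iff.mpr hc)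
      rw [← mul_div_mul_right _ _ hnorm]
      congr 1 <;> ring
  calc 2 * (l * RCLike.re (y * star c)) - m * ‖y‖ ^ 2 - t * (l * ‖y‖ ^ 2)
      ≤ 2 * (‖y‖ * (l * ‖c‖)) - (m + t * l) * ‖y‖ ^ 2 := by
        linarith [mul_le_mul_of_nonneg_left hcauchy hl]
    _ ≤ (l * ‖c‖) ^ 2 / (m + t * l) :=
        two_mul_mul_sub_mul_sq_le_sq_div (by positivity) hzero ‖y‖
    _ = _ := hcancel

lemma re_trace_sub_le_quadDiv_nussbaumSzkola (hρ : ρ.PosSemidef) (hσ : σ.PosSemidef)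
    {X : Matrix n n 𝕜} (hX : X.IsHermitian) {t : ℝ} (ht : 0 < t) :
    2 * RCLike.re (ρ * X).trace - RCLike.re (σ * (X * X)).trace
        - t * RCLike.re (ρ * (X * X)).trace
      ≤ quadDiv t (nussbaumSzkolaFst hρ.1 hσ.1) (nussbaumSzkolaSnd hρ.1 hσ.1) := by
  set Y := (eigenMatrix hρ.1)ᴴ * X * eigenMatrix hσ.1 with hY
  have hlinear : RCLike.re (ρ * X).trace = ∑ i, ∑ j, hρ.1.eigenvalues i
      * RCLike.re (Y i j * star (eigenvectorOverlap hρ.1 hσ.1 i j)) := by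
    have htrace := trace_mul_mul_conjTranspose hρ.1 hσ.1 X 1
    rw [conjTranspose_one, Matrix.mul_one, Matrix.mul_one] at htrace
    simp only [htrace, map_sum, RCLike.re_ofReal_mul, eigenvectorOverlap, Y]
  have hquadρ : RCLike.re (ρ * (X * X)).trace = ∑ i, ∑ j, hρ.1.eigenvalues i * ‖Y i j‖ ^ 2 := by
    simpa only [hX.eq] using re_trace_mul_mul_conjTranspose_self hρ.1 hσ.1 X
  have hquadσ : RCLike.re (σ * (X * X)).trace = ∑ i, ∑ j, hσ.1.eigenvalues j * ‖Y i j‖ ^ 2 := by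
    have hswap : (eigenMatrix hσ.1)ᴴ * X * eigenMatrix hρ.1 = Yᴴ := by
      simp only [hY, conjTranspose_mul, conjTranspose_conjTranspose, hX.eq, Matrix.mul_assoc]
    have htrace := re_trace_mul_mul_conjTranspose_self hσ.1 hρ.1 X
    simp only [hX.eq, hswap, conjTranspose_apply, norm_star] at htrace
    rw [htrace, Finset.sum_comm]
  rw [hlinear, hquadρ, hquadσ, quadDiv, Fintype.sum_prod_type]
  simp only [Finset.mul_sum, ← Finset.sum_sub_distrib]
  exact Finset.sum_le_sum fun i _ ↦ Finset.sum_le_sum fun j _ ↦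
    two_mul_re_mul_star_sub_le (hρ.eigenvalues_nonneg i) (hσ.eigenvalues_nonneg j) ht _ _

theorem quadDiv_bornProb_le {E : B → Matrix n n 𝕜} (hE : IsPOVM E) (hρ : ρ.PosSemidef)
    (hσ : σ.PosSemidef) {t : ℝ} (ht : 0 < t) :
    quadDiv t (bornProb E ρ) (bornProb E σ)
      ≤ quadDiv t (nussbaumSzkolaFst hρ.1 hσ.1) (nussbaumSzkolaSnd hρ.1 hσ.1) := by
  let x : B → ℝ := fun b ↦ bornProb E ρ b / (bornProb E σ b + t * bornProb E ρ b)
  let X : Matrix n n 𝕜 := ∑ b, x b • E b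
  calc quadDiv t (bornProb E ρ) (bornProb E σ)
      = 2 * ∑ b, x b * bornProb E ρ b - ∑ b, x b ^ 2 * bornProb E σ b
          - t * ∑ b, x b ^ 2 * bornProb E ρ b := quadDiv_eq_sum_optimal fun _ ↦ rfl
    _ ≤ 2 * RCLike.re (ρ * X).trace - RCLike.re (σ * (X * X)).trace
          - t * RCLike.re (ρ * (X * X)).trace := by
        rw [re_trace_mul_sum_smul]
        gcongr
        · exact hE.re_trace_mul_sq_le hσ x
        · exact hE.re_trace_mul_sq_le hρ x
    _ ≤ _ := re_trace_sub_le_quadDiv_nussbaumSzkola hρ hσ (hE.isHermitian_sum_smul x) ht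

theorem relEntropy_bornProb_le_quantumRelEntropy {E : B → Matrix n n 𝕜} (hE : IsPOVM E)
    (hρ : ρ.PosSemidef) (hσ : σ.PosSemidef) {c : ℝ} (hc : 0 < c)
    (hdom : (σ - c • ρ).PosSemidef) :
    relEntropy (bornProb E ρ) (bornProb E σ) ≤ quantumRelEntropy hρ.1 hσ.1 :=
  relEntropy_le_of_quadDiv_le (hE.bornProb_nonneg hρ) (hE.bornProb_nonneg hσ)
    (fun _ ↦ hE.bornProb_eq_zero_of_dominated hρ hc hdom)
    (nussbaumSzkolaFst_nonneg hρ hσ.1) (nussbaumSzkolaSnd_nonneg hρ.1 hσ)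
    (fun _ ↦ nussbaumSzkolaFst_eq_zero_of_dominated hρ hσ.1 hc hdom)
    ((hE.sum_bornProb ρ).trans (sum_nussbaumSzkolaFst hρ.1 hσ.1).symm)
    fun _ ht ↦ quadDiv_bornProb_le hE hρ hσ ht

end DataProcessing

section Holevo

variable {A B : Type*} [Fintype A] [Fintype B]

lemma shannon_eq (p : A → ℝ) : shannon p = -(∑ a, p a * Real.log (p a)) / Real.log 2 := by
  simp only [shannon, Real.logb, ← mul_div_assoc, ← Finset.sum_div, neg_div]

lemma vnEntropy_eq_shannon {d : ℕ} {ρ : Matrix (Fin d) (Fin d) ℂ} (hρ : ρ.IsHermitian) :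
    vnEntropy ρ = shannon hρ.eigenvalues := by
  rw [vnEntropy, dif_pos hρ, shannon]

theorem mutualInformation_eq_sum_relEntropy (p : A → ℝ) {P : A → B → ℝ}
    (hP : ∀ a, ∑ b, P a b = 1) :
    shannon p + shannon (fun b ↦ ∑ a, p a * P a b)
        - shannon (fun ab : A × B ↦ p ab.1 * P ab.1 ab.2)
      = (∑ a, p a * relEntropy (P a) fun b ↦ ∑ a', p a' * P a' b) / Real.log 2 := by
  have hterm : ∀ a b, p a * P a b * Real.log (p a * P a b)
      = p a * Real.log (p a) * P a b + p a * (P a b * Real.log (P a b)) := fun a b ↦ by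
    rcases eq_or_ne (p a) 0 with hpa | hpa
    · simp [hpa]
    rcases eq_or_ne (P a b) 0 with hPab | hPab
    · simp [hPab]
    rw [Real.log_mul hpa hPab]
    ring
  have hjoint : ∑ a, ∑ b, p a * P a b * Real.log (p a * P a b)
      = ∑ a, p a * Real.log (p a) + ∑ a, p a * ∑ b, P a b * Real.log (P a b) := by
    simp only [hterm, Finset.sum_add_distrib, ← Finset.mul_sum, hP, mul_one]
  have hmarginal : ∑ b, (∑ a, p a * P a b) * Real.log (∑ a, p a * P a b)
      = ∑ a, p a * ∑ b, P a b * Real.log (∑ a', p a' * P a' b) := by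
    simp only [Finset.sum_mul, Finset.mul_sum, mul_assoc]
    exact Finset.sum_comm
  simp only [shannon_eq, Fintype.sum_prod_type, relEntropy, mul_sub, Finset.sum_sub_distrib]
  rw [hjoint, hmarginal]
  ring

theorem holevoQuantity_eq_sum_quantumRelEntropy {d : ℕ} {p : A → ℝ} (hp : ∀ a, 0 ≤ p a)
    {ρ : A → Matrix (Fin d) (Fin d) ℂ} (hρ : ∀ a, (ρ a).PosSemidef) :
    vnEntropy (∑ a, p a • ρ a) - ∑ a, p a * vnEntropy (ρ a)
      = (∑ a, p a * quantumRelEntropy (hρ a).1 (posSemidef_sum_smul hp hρ).1) / Real.log 2 := by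
  have hσ := (posSemidef_sum_smul hp hρ).1
  have hterm : ∀ a, p a * quantumRelEntropy (hρ a).1 hσ
      = p a * ∑ i, (hρ a).1.eigenvalues i * Real.log ((hρ a).1.eigenvalues i)
        - p a * ∑ j, eigenbasisDiag hσ (ρ a) j * Real.log (hσ.eigenvalues j) := fun a ↦ by
    rcases (hp a).eq_or_lt with hpa | hpa
    · simp only [← hpa, zero_mul, sub_zero]
    rw [quantumRelEntropy_eq fun _ ↦ nussbaumSzkolaFst_eq_zero_of_dominated (hρ a) hσ hpa
      (posSemidef_sum_smul_sub_smul hp hρ a), mul_sub]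
  have haverage : ∑ a, p a * ∑ j, eigenbasisDiag hσ (ρ a) j * Real.log (hσ.eigenvalues j)
      = ∑ j, hσ.eigenvalues j * Real.log (hσ.eigenvalues j) := by
    have hdiag : ∀ j, ∑ a, p a * eigenbasisDiag hσ (ρ a) j = hσ.eigenvalues j := fun j ↦ by
      rw [← eigenbasisDiag_sum_smul, eigenbasisDiag_self]
    simp only [Finset.mul_sum, ← mul_assoc]
    rw [Finset.sum_comm]
    simp only [← Finset.sum_mul, hdiag]
  simp only [vnEntropy_eq_shannon hσ, vnEntropy_eq_shannon (hρ _).1, shannon_eq, hterm,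
    Finset.sum_sub_distrib, haverage, mul_div_assoc', ← Finset.sum_div, mul_neg,
    Finset.sum_neg_distrib]
  ring

end Holevo

theorem stmt4_general (d : ℕ) (A B : Type*) [Fintype A] [Fintype B]
    (p : A → ℝ) (hp0 : ∀ a, 0 ≤ p a)
    (ρ : A → Matrix (Fin d) (Fin d) ℂ) (hρ : ∀ a, IsDensity (ρ a))
    (E : B → Matrix (Fin d) (Fin d) ℂ) (hE : ∀ b, (E b).PosSemidef)
    (hEsum : ∑ b, E b = 1) :
    shannon p + shannon (fun b => ∑ a, p a * ((ρ a * E b).trace.re))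
        - shannon (fun ab : A × B => p ab.1 * ((ρ ab.1 * E ab.2).trace.re))
      ≤ vnEntropy (∑ a, (p a : ℂ) • ρ a) - ∑ a, p a * vnEntropy (ρ a) := by
  have hpovm : IsPOVM E := ⟨hE, hEsum⟩
  have hpsd : ∀ a, (ρ a).PosSemidef := fun a ↦ (hρ a).1
  have hnormalized : ∀ a, ∑ b, bornProb E (ρ a) b = 1 := fun a ↦ by
    rw [hpovm.sum_bornProb, (hρ a).2, RCLike.one_re]
  have hmeasured : ∀ a, p a * relEntropy (bornProb E (ρ a)) (bornProb E (∑ a', p a' • ρ a'))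
      ≤ p a * quantumRelEntropy (hpsd a).1 (posSemidef_sum_smul hp0 hpsd).1 := fun a ↦ by
    rcases (hp0 a).eq_or_lt with hpa | hpa
    · simp only [← hpa, zero_mul, le_refl]
    exact mul_le_mul_of_nonneg_left (relEntropy_bornProb_le_quantumRelEntropy hpovm (hpsd a)
      (posSemidef_sum_smul hp0 hpsd) hpa (posSemidef_sum_smul_sub_smul hp0 hpsd a)) hpa.le
  simp only [Complex.coe_smul]
  rw [holevoQuantity_eq_sum_quantumRelEntropy hp0 hpsd]
  refine (mutualInformation_eq_sum_relEntropy p hnormalized).trans_le ?_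
  simp only [← bornProb_sum_smul]
  exact div_le_div_of_nonneg_right (Finset.sum_le_sum fun a _ ↦ hmeasured a)
    (Real.log_nonneg one_le_two)

/-- The Holevo bound: for an ensemble `(pₐ, ρₐ)` and a POVM `(E_b)`, the mutual
information `H(A:B) = H(P_A) + H(P_B) − H(P)` of the joint outcome distribution
`P(a,b) = pₐ Tr(ρₐ E_b)` is bounded by `S(ρ) − Σₐ pₐ S(ρₐ)` where `ρ = Σₐ pₐ ρₐ`. -/
theorem stmt4 (d : ℕ) (A B : Type*) [Fintype A] [Fintype B]
    (p : A → ℝ) (hp0 : ∀ a, 0 ≤ p a) (hp1 : ∑ a, p a = 1)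
    (ρ : A → Matrix (Fin d) (Fin d) ℂ) (hρ : ∀ a, IsDensity (ρ a))
    (E : B → Matrix (Fin d) (Fin d) ℂ) (hE : ∀ b, (E b).PosSemidef)
    (hEsum : ∑ b, E b = 1) :
    shannon p + shannon (fun b => ∑ a, p a * ((ρ a * E b).trace.re))
        - shannon (fun ab : A × B => p ab.1 * ((ρ ab.1 * E ab.2).trace.re))
      ≤ vnEntropy (∑ a, (p a : ℂ) • ρ a) - ∑ a, p a * vnEntropy (ρ a) :=
  stmt4_general d A B p hp0 ρ hρ E hE hEsum
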